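/- arXiv:2302.06334 — 3 statements merged into one kernel-verified Lean document; each statement's English description precedes it below -/
import Mathlib

section
/- Let δ : ]0,∞[ → ℝ be continuously differentiable, nonnegative and bounded. Then for every r_A, r_B > 0 and every T > 0 there exists a unique solution r : [-T,0] → ]0,∞[ of r̈ + δ(r)ṙ = -1/r² satisfying r(-T) = r_A and r(0) = r_B. -/
open Set

/-- Positive solutions of the damped one-dimensional Kepler equation
`r̈ + δ(r)ṙ = -1/r²` on a set `S` of times. -/
def Kepler1DOn (δ : ℝ → ℝ) (S : Set ℝ) (r r' : ℝ → ℝ) : Prop :=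
  (∀ t ∈ S, 0 < r t) ∧
  (∀ t ∈ S, HasDerivWithinAt r (r' t) S t) ∧
  (∀ t ∈ S, HasDerivWithinAt r' (-(δ (r t)) * r' t - 1 / (r t) ^ 2) S t)
lemma lip_aux (f f' : ℝ → ℝ) (hd : ∀ r > (0:ℝ), HasDerivAt f (f' r) r) (hc : ContinuousOn f' (Ioi 0))
   (a b : ℝ) (ha : 0 < a) : ∃ K : ℝ, 0 ≤ K ∧ ∀ x ∈ Icc a b, ∀ y ∈ Icc a b, |f x - f y| ≤ K * |x - y| := by
  obtain ⟨C, hC⟩ := isCompact_Icc.exists_bound_of_continuousOn (s := Icc a b) (hc.mono (fun x hx => lt_of_lt_of_le ha hx.1))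
  refine ⟨|C|, abs_nonneg _, fun x hx y hy => ?_⟩
  have := (convex_Icc a b).norm_image_sub_le_of_norm_hasDerivWithin_le (f := f) (f' := f') (C := |C|)
    (fun z hz => (hd z (lt_of_lt_of_le ha hz.1)).hasDerivWithinAt) (fun z hz => (hC z hz).trans (le_abs_self _)) hy hx
  simpa using this

theorem uniq_aux (δ : ℝ → ℝ) (D T : ℝ) (hT : 0 < T) (hδc : ContinuousOn δ (Ioi 0))
    (hδ0 : ∀ r > (0 : ℝ), 0 ≤ δ r) (hδb : ∀ r > (0 : ℝ), δ r ≤ D)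
    (r r' q q' : ℝ → ℝ) (hr : ∀ t ∈ Icc (-T) 0, 0 < r t) (hq : ∀ t ∈ Icc (-T) 0, 0 < q t)
    (hr1 : ∀ t ∈ Icc (-T) 0, HasDerivWithinAt r (r' t) (Icc (-T) 0) t)
    (hq1 : ∀ t ∈ Icc (-T) 0, HasDerivWithinAt q (q' t) (Icc (-T) 0) t)
    (hr2 : ∀ t ∈ Icc (-T) 0, HasDerivWithinAt r' (-(δ (r t)) * r' t - 1 / (r t) ^ 2) (Icc (-T) 0) t)
    (hq2 : ∀ t ∈ Icc (-T) 0, HasDerivWithinAt q' (-(δ (q t)) * q' t - 1 / (q t) ^ 2) (Icc (-T) 0) t)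
    (hA : r (-T) = q (-T)) (hB : r 0 = q 0) : ∀ t ∈ Icc (-T) 0, r t = q t := by
  set Δ : ℝ → ℝ := fun x => ∫ y in (1:ℝ)..x, δ y with hΔ
  have hΔd : ∀ x > (0:ℝ), HasDerivAt Δ (δ x) x := by
    intro x hx
    have hsub : uIcc 1 x ⊆ Ioi (0:ℝ) := fun y hy => lt_of_lt_of_le (lt_min one_pos hx) hy.1
    refine intervalIntegral.integral_hasDerivAt_right ((hδc.mono hsub).intervalIntegrable) ?_ (hδc.continuousAt (Ioi_mem_nhds hx))
    exact hδc.stronglyMeasurableAtFilter isOpen_Ioi x hx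
  -- Δ is monotone and D-Lipschitz
  have hmono : MonotoneOn Δ (Ioi 0) := by
    apply monotoneOn_of_hasDerivWithinAt_nonneg (convex_Ioi 0) (f' := δ)
    · exact fun x hx => (hΔd x hx).continuousAt.continuousWithinAt
    · intro x hx; rw [interior_Ioi] at hx; exact (hΔd x hx).hasDerivWithinAt
    · intro x hx; rw [interior_Ioi] at hx; exact hδ0 x hx
  have hmono2 : MonotoneOn (fun x => D * x - Δ x) (Ioi 0) := by
    apply monotoneOn_of_hasDerivWithinAt_nonneg (convex_Ioi 0) (f' := fun x => D * 1 - δ x)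
    · exact fun x hx => (((hasDerivAt_id x).const_mul D).sub (hΔd x hx)).continuousAt.continuousWithinAt
    · intro x hx; rw [interior_Ioi] at hx; exact (((hasDerivAt_id x).const_mul D).sub (hΔd x hx)).hasDerivWithinAt
    · intro x hx; rw [interior_Ioi] at hx; have := hδb x hx; linarith
  set w : ℝ → ℝ := fun t => r t - q t with hw
  set p : ℝ → ℝ := fun t => r' t - q' t + (Δ (r t) - Δ (q t)) with hp
  set s' : ℝ → ℝ := fun t => (1/(q t)^2 - 1/(r t)^2) * w t + p t * (p t - (Δ (r t) - Δ (q t))) with hs'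
  have hsd : ∀ t ∈ Icc (-T) 0, HasDerivWithinAt (fun t => p t * w t) (s' t) (Icc (-T) 0) t := by
    intro t ht
    have h1 := ((hΔd _ (hr t ht)).comp_hasDerivWithinAt t (hr1 t ht))
    have h2 := ((hΔd _ (hq t ht)).comp_hasDerivWithinAt t (hq1 t ht))
    have h3 := (((hr2 t ht).sub (hq2 t ht)).add (h1.sub h2)).mul ((hr1 t ht).sub (hq1 t ht))
    refine h3.congr_deriv ?_
    simp only [hs', hp, hw, Pi.sub_apply, Pi.add_apply, Function.comp]
    ring
  have hsA : p (-T) * w (-T) = 0 := by simp [hw, hA]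
  have hsB : p 0 * w 0 = 0 := by simp [hw, hB]
  have hm : ∀ t ∈ Icc (-T) 0, w t ≠ 0 → 0 < (1/(q t)^2 - 1/(r t)^2) * w t := by
    intro t ht hwt
    have h1 := hr t ht
    have h2 := hq t ht
    have : (1/(q t)^2 - 1/(r t)^2) * w t = (r t + q t) * (w t)^2 / ((q t)^2 * (r t)^2) := by
      simp only [hw]; field_simp; ring
    rw [this]; positivity
  have hm0 : ∀ t ∈ Icc (-T) 0, 0 ≤ (1/(q t)^2 - 1/(r t)^2) * w t := by
    intro t ht
    by_cases h : w t = 0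
    · simp [h]
    · exact (hm t ht h).le
  have hneg : ∀ t ∈ Icc (-T) 0, p t * w t ≤ 0 → p t * (Δ (r t) - Δ (q t)) ≤ 0 := by
    intro t ht h
    rcases lt_trichotomy (w t) 0 with h1 | h1 | h1
    · have h2 : Δ (r t) ≤ Δ (q t) := hmono (hr t ht) (hq t ht) (by simp only [hw] at h1; linarith)
      have : 0 ≤ p t := by by_contra hh; push Not at hh; nlinarith
      nlinarith
    · have : r t = q t := by simp only [hw] at h1; linarith
      simp [this]
    · have h2 : Δ (q t) ≤ Δ (r t) := hmono (hq t ht) (hr t ht) (by simp only [hw] at h1; linarith)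
      have : p t ≤ 0 := by by_contra hh; push Not at hh; nlinarith
      nlinarith
  have hpos : ∀ t ∈ Icc (-T) 0, 0 ≤ p t * w t → p t * (Δ (r t) - Δ (q t)) ≤ D * (p t * w t) := by
    intro t ht h
    rcases lt_trichotomy (w t) 0 with h1 | h1 | h1
    · have h2 := hmono2 (hr t ht) (hq t ht) (by simp only [hw] at h1; linarith)
      have : p t ≤ 0 := by by_contra hh; push Not at hh; nlinarith
      simp only [hw] at *
      nlinarith
    · have : r t = q t := by simp only [hw] at h1; linarith
      simp [this, hw]
    · have h2 := hmono2 (hq t ht) (hr t ht) (by simp only [hw] at h1; linarith)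
      have : 0 ≤ p t := by by_contra hh; push Not at hh; nlinarith
      simp only [hw] at *
      nlinarith
  have hsc : ContinuousOn (fun t => p t * w t) (Icc (-T) 0) := fun t ht => (hsd t ht).continuousWithinAt
  have hs0 : ∀ t ∈ Icc (-T) 0, 0 ≤ p t * w t := by
    obtain ⟨t0, ht0, hmin⟩ := isCompact_Icc.exists_isMinOn (nonempty_Icc.2 (by linarith : -T ≤ 0)) hsc
    suffices 0 ≤ p t0 * w t0 from fun t ht => this.trans (hmin ht)
    by_contra hlt
    push Not at hlt
    have ha : t0 ≠ -T := by rintro rfl; linarith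
    have hb : t0 ≠ 0 := by rintro rfl; linarith
    have hn : Icc (-T) 0 ∈ nhds t0 := Icc_mem_nhds (lt_of_le_of_ne ht0.1 ha.symm) (lt_of_le_of_ne ht0.2 hb)
    have h0 := (hmin.isLocalMin hn).hasDerivAt_eq_zero ((hsd t0 ht0).hasDerivAt hn)
    have h1 := hneg t0 ht0 hlt.le
    have h2 := hm t0 ht0 (by intro h; simp [h] at hlt)
    simp only [hs'] at h0
    nlinarith [sq_nonneg (p t0)]
  have hE : ∀ t ∈ Icc (-T) 0, HasDerivWithinAt (fun t => Real.exp (D*t) * (p t * w t)) (Real.exp (D*t) * (D * (p t * w t) + s' t)) (Icc (-T) 0) t := by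
    intro t ht
    have h1 : HasDerivAt (fun t => Real.exp (D*t)) (Real.exp (D*t) * (D * 1)) t := ((hasDerivAt_id t).const_mul D).exp
    refine (h1.hasDerivWithinAt.mul (hsd t ht)).congr_deriv ?_
    ring
  have hEm : MonotoneOn (fun t => Real.exp (D*t) * (p t * w t)) (Icc (-T) 0) := by
    apply monotoneOn_of_hasDerivWithinAt_nonneg (convex_Icc _ _) (f' := fun t => Real.exp (D*t) * (D * (p t * w t) + s' t))
    · exact fun t ht => (hE t ht).continuousWithinAt
    · intro t ht; exact (hE t (interior_subset ht)).mono interior_subset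
    · intro t ht
      have ht' := interior_subset ht
      have h1 := hpos t ht' (hs0 t ht')
      have h2 := hm0 t ht'
      apply mul_nonneg (Real.exp_pos _).le
      simp only [hs']
      nlinarith [sq_nonneg (p t)]
  have hz : ∀ t ∈ Icc (-T) 0, p t * w t = 0 := by
    intro t ht
    have h1 := hEm ht (right_mem_Icc.2 (by linarith)) ht.2
    simp only [hsB, mul_zero] at h1
    have := hs0 t ht
    by_contra h
    have h3 : 0 < p t * w t := lt_of_le_of_ne this (Ne.symm h)
    have := mul_pos (Real.exp_pos (D*t)) h3
    linarith
  intro t ht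
  rcases eq_or_lt_of_le ht.1 with h | h
  · rw [← h]; exact hA
  rcases eq_or_lt_of_le ht.2 with h' | h'
  · rw [h']; exact hB
  have hn : Icc (-T) 0 ∈ nhds t := Icc_mem_nhds h h'
  have hmin : IsMinOn (fun t => p t * w t) (Icc (-T) 0) t := by
    intro x hx; simp [hz t ht, hz x hx]
  have h0 := (hmin.isLocalMin hn).hasDerivAt_eq_zero ((hsd t ht).hasDerivAt hn)
  have h1 := hneg t ht (hz t ht).le
  by_contra hne
  have h2 := hm t ht (sub_ne_zero.2 hne)
  simp only [hs'] at h0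
  nlinarith [sq_nonneg (p t)]

lemma shoot_aux (c : ℝ → ℝ) (G : ℝ → ℝ → ℝ) (N L K T rA rB : ℝ) (hN : 0 ≤ N) (hL : N ≤ L) (hK : 1 ≤ K) (hT : 0 < T)
    (hc1 : ∀ x y, |c x - c y| ≤ |x - y|) (hcN : ∀ x, |c x| ≤ N)
    (hcp : ∀ x, N ≤ x → c x = N) (hcm : ∀ x, x ≤ -N → c x = -N)
    (hG : ∀ x v, |G x v| ≤ L) (hGK : ∀ x v y u, |G x v - G y u| ≤ K * max |x - y| |v - u|)
    (hAB : |rB - rA| ≤ N * T) :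
    ∃ r v : ℝ → ℝ, (∀ t ∈ Icc (-T) 0, HasDerivWithinAt r (c (v t)) (Icc (-T) 0) t) ∧
      (∀ t ∈ Icc (-T) 0, HasDerivWithinAt v (G (r t) (v t)) (Icc (-T) 0) t) ∧ r (-T) = rA ∧ r 0 = rB := by
  have hL0 : 0 ≤ L := hN.trans hL
  have hLT : 0 ≤ L * T := by positivity
  set R : ℝ := N + L * T with hR
  have hR0 : 0 ≤ R := by positivity
  have hPL : IsPicardLindelof (fun (_ : ℝ) (z : ℝ × ℝ) => (c z.2, G z.1 z.2)) (tmin := -T) (tmax := 0)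
      ⟨-T, left_mem_Icc.2 (by linarith)⟩ ((rA, 0) : ℝ × ℝ) (R + L * T).toNNReal R.toNNReal L.toNNReal K.toNNReal := by
    refine ⟨fun t _ => ?_, fun x _ => continuousOn_const, fun t _ z _ => ?_, ?_⟩
    · apply LipschitzWith.lipschitzOnWith
      apply LipschitzWith.of_dist_le_mul
      intro z y
      rw [Real.coe_toNNReal _ (by linarith)]
      simp only [Prod.dist_eq, Real.dist_eq]
      refine max_le ?_ (hGK _ _ _ _)
      have h1 := hc1 z.2 y.2
      have h2 := le_max_right |z.1 - y.1| |z.2 - y.2|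
      have h3 := abs_nonneg (z.2 - y.2)
      nlinarith
    · rw [Real.coe_toNNReal _ hL0, Prod.norm_def]
      exact max_le ((hcN _).trans hL) (hG _ _)
    · rw [Real.coe_toNNReal _ hL0, Real.coe_toNNReal _ hR0, Real.coe_toNNReal _ (by positivity)]
      simp [hT.le]
  obtain ⟨α, hα, L', hα'⟩ := hPL.exists_forall_mem_closedBall_eq_hasDerivWithinAt_lipschitzOnWith
  have hmem : ∀ x ∈ Icc (-R) R, ((rA, x) : ℝ × ℝ) ∈ Metric.closedBall ((rA, 0) : ℝ × ℝ) (R.toNNReal : ℝ) := by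
    intro x hx
    rw [Real.coe_toNNReal _ hR0, Metric.mem_closedBall, Prod.dist_eq]
    simp only [dist_self, Real.dist_eq, sub_zero]
    exact max_le hR0 (abs_le.2 hx)
  have hd1 : ∀ x ∈ Icc (-R) R, ∀ t ∈ Icc (-T) 0, HasDerivWithinAt (fun t => (α (rA, x) t).1) (c (α (rA, x) t).2) (Icc (-T) 0) t :=
    fun x hx t ht => ((hα _ (hmem x hx)).2 t ht).fst
  have hd2 : ∀ x ∈ Icc (-R) R, ∀ t ∈ Icc (-T) 0, HasDerivWithinAt (fun t => (α (rA, x) t).2) (G (α (rA, x) t).1 (α (rA, x) t).2) (Icc (-T) 0) t :=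
    fun x hx t ht => ((hα _ (hmem x hx)).2 t ht).snd
  have hi : ∀ x ∈ Icc (-R) R, α (rA, x) (-T) = (rA, x) := fun x hx => (hα _ (hmem x hx)).1
  have hcont : ContinuousOn (fun x => (α (rA, x) 0).1) (Icc (-R) R) := by
    have h1 := (hα' 0 (right_mem_Icc.2 (by linarith))).continuousOn
    have h2 : ContinuousOn (fun x : ℝ => ((rA, x) : ℝ × ℝ)) (Icc (-R) R) := by fun_prop
    exact continuous_fst.comp_continuousOn (h1.comp h2 hmem)
  have hTm : -T ∈ Icc (-T) 0 := left_mem_Icc.2 (by linarith)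
  have h0m : (0:ℝ) ∈ Icc (-T) 0 := right_mem_Icc.2 (by linarith)
  have hvb : ∀ x ∈ Icc (-R) R, ∀ t ∈ Icc (-T) 0, |(α (rA, x) t).2 - x| ≤ L * T := by
    intro x hx t ht
    have := (convex_Icc (-T) 0).norm_image_sub_le_of_norm_hasDerivWithin_le (hd2 x hx) (fun z _ => hG _ _) hTm ht
    simp only [hi x hx, Real.norm_eq_abs] at this
    refine this.trans (mul_le_mul_of_nonneg_left ?_ hL0)
    rw [abs_of_nonneg (by linarith [ht.1])]; linarith [ht.2]
  have hconst : ∀ x ∈ Icc (-R) R, ∀ m : ℝ, (∀ t ∈ Icc (-T) 0, c (α (rA, x) t).2 = m) → (α (rA, x) 0).1 = rA + m * T := by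
    intro x hx m hm
    have h := (convex_Icc (-T) 0).norm_image_sub_le_of_norm_hasDerivWithin_le (C := 0)
      (f := fun t => (α (rA, x) t).1 - m * t) (f' := fun t => c (α (rA, x) t).2 - m * 1)
      (fun t ht => (hd1 x hx t ht).sub (((hasDerivAt_id t).const_mul m).hasDerivWithinAt)) (fun z hz => by simp [hm z hz]) hTm h0m
    simp only [hi x hx, zero_mul, norm_le_zero_iff] at h
    linarith
  have hRm : R ∈ Icc (-R) R := ⟨by linarith, le_rfl⟩
  have hRm' : -R ∈ Icc (-R) R := ⟨le_rfl, by linarith⟩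
  have e1 := hconst R hRm N (fun t ht => hcp _ (by have := (abs_le.1 (hvb R hRm t ht)).1; linarith))
  have e2 := hconst (-R) hRm' (-N) (fun t ht => hcm _ (by have := (abs_le.1 (hvb _ hRm' t ht)).2; linarith))
  have hAB' := abs_le.1 hAB
  obtain ⟨x, hx, hxB⟩ := intermediate_value_Icc (by linarith : -R ≤ R) hcont
    (show rB ∈ Icc _ _ from ⟨by rw [e2]; linarith, by rw [e1]; linarith⟩)
  exact ⟨_, _, hd1 x hx, hd2 x hx, by rw [hi x hx], hxB⟩

lemma lower_aux (c r v g : ℝ → ℝ) (N T : ℝ) (hT : 0 < T)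
    (hc0 : ∀ x, c x = 0 → x = 0) (hcneg : ∀ x, x < 0 → c x < 0)
    (h1 : ∀ t ∈ Icc (-T) 0, HasDerivWithinAt r (c (v t)) (Icc (-T) 0) t)
    (h2 : ∀ t ∈ Icc (-T) 0, HasDerivWithinAt v (g t) (Icc (-T) 0) t)
    (hg : ∀ t ∈ Icc (-T) 0, v t = 0 → g t < 0) :
    ∀ t ∈ Icc (-T) 0, min (r (-T)) (r 0) ≤ r t := by
  have hrc : ContinuousOn r (Icc (-T) 0) := fun t ht => (h1 t ht).continuousWithinAt
  obtain ⟨t0, ht0, hmin⟩ := isCompact_Icc.exists_isMinOn (nonempty_Icc.2 (by linarith : -T ≤ 0)) hrc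
  suffices min (r (-T)) (r 0) ≤ r t0 from fun t ht => this.trans (hmin ht)
  by_cases ha : t0 = -T
  · subst ha; exact min_le_left _ _
  by_cases hb : t0 = 0
  · subst hb; exact min_le_right _ _
  exfalso
  have ha' := lt_of_le_of_ne ht0.1 (Ne.symm ha)
  have hb' := lt_of_le_of_ne ht0.2 hb
  have hn : Icc (-T) 0 ∈ nhds t0 := Icc_mem_nhds ha' hb'
  have hv0 := hc0 _ ((hmin.isLocalMin hn).hasDerivAt_eq_zero ((h1 t0 ht0).hasDerivAt hn))
  have hvd := (h2 t0 ht0).hasDerivAt hn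
  have hs := eventually_nhdsWithin_sign_eq_of_deriv_neg (f := v) (x₀ := t0) (by rw [hvd.deriv]; exact hg t0 ht0 hv0) hv0
  obtain ⟨η, hη, hball⟩ := Metric.eventually_nhds_iff.1 hs
  set u := min (t0 + η / 2) 0 with hu
  have hu1 : t0 < u := lt_min (by linarith) hb'
  have hu2 : u ≤ 0 := min_le_right _ _
  have hu3 : u ≤ t0 + η / 2 := min_le_left _ _
  have hsub : Icc t0 u ⊆ Icc (-T) 0 := Icc_subset_Icc ht0.1 hu2
  obtain ⟨ξ, hξ, he⟩ := exists_hasDerivAt_eq_slope r (fun t => c (v t)) hu1 (hrc.mono hsub)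
    (fun x hx => (h1 x (hsub (Ioo_subset_Icc_self hx))).hasDerivAt (Icc_mem_nhds (by linarith [hx.1]) (by linarith [hx.2])))
  have hvξ : v ξ < 0 := by
    have := hball (y := ξ) (by rw [Real.dist_eq, abs_of_pos (by linarith [hξ.1])]; linarith [hξ.2])
    rw [sign_neg (by linarith [hξ.1] : t0 - ξ < 0)] at this
    exact sign_eq_neg_one_iff.1 this
  have h3 := hcneg _ hvξ
  have h4 : r t0 ≤ r u := hmin (hsub (right_mem_Icc.2 hu1.le))
  have h5 : 0 ≤ (r u - r t0) / (u - t0) := div_nonneg (by linarith) (by linarith)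
  linarith

/-- Two-sided Gronwall type estimate. -/
lemma gron_aux (v g : ℝ → ℝ) (D b T t0 : ℝ) (hT : 0 < T) (hD : 0 ≤ D) (hb : 0 ≤ b)
    (h2 : ∀ t ∈ Icc (-T) 0, HasDerivWithinAt v (g t) (Icc (-T) 0) t)
    (hg : ∀ t ∈ Icc (-T) 0, |g t| ≤ D * |v t| + b) (ht0 : t0 ∈ Icc (-T) 0) :
    ∀ t ∈ Icc (-T) 0, v t ^ 2 ≤ (v t0 ^ 2 + b ^ 2) * Real.exp ((2 * D + 1) * T) := by
  set C := 2 * D + 1 with hC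
  have hC0 : 0 ≤ C := by positivity
  have key : ∀ t ∈ Icc (-T) 0, |2 * v t * g t| ≤ C * (v t ^ 2 + b ^ 2) := by
    intro t ht
    have h1 := hg t ht
    have h3 := abs_nonneg (v t)
    rw [abs_mul, abs_mul, abs_two, ← sq_abs (v t)]
    nlinarith [sq_nonneg (|v t| - b), mul_le_mul_of_nonneg_left h1 h3, mul_nonneg hD (sq_nonneg b)]
  have hd : ∀ k : ℝ, ∀ t ∈ Icc (-T) 0, HasDerivWithinAt (fun t => Real.exp (k * t) * (v t ^ 2 + b ^ 2))
      (Real.exp (k * t) * (k * (v t ^ 2 + b ^ 2) + 2 * v t * g t)) (Icc (-T) 0) t := by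
    intro k t ht
    have h1 : HasDerivAt (fun t => Real.exp (k*t)) (Real.exp (k*t) * (k * 1)) t := ((hasDerivAt_id t).const_mul k).exp
    refine (h1.hasDerivWithinAt.mul (((h2 t ht).pow 2).add_const (b^2))).congr_deriv ?_
    simp; ring
  have hm : MonotoneOn (fun t => Real.exp (C * t) * (v t ^ 2 + b ^ 2)) (Icc (-T) 0) := by
    apply monotoneOn_of_hasDerivWithinAt_nonneg (convex_Icc _ _)
    · exact fun t ht => (hd C t ht).continuousWithinAt
    · intro t ht; exact (hd C t (interior_subset ht)).mono interior_subset
    · intro t ht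
      apply mul_nonneg (Real.exp_pos _).le
      linarith [(abs_le.1 (key t (interior_subset ht))).1]
  have ha : AntitoneOn (fun t => Real.exp (-C * t) * (v t ^ 2 + b ^ 2)) (Icc (-T) 0) := by
    apply antitoneOn_of_hasDerivWithinAt_nonpos (convex_Icc _ _)
    · exact fun t ht => (hd (-C) t ht).continuousWithinAt
    · intro t ht; exact (hd (-C) t (interior_subset ht)).mono interior_subset
    · intro t ht
      apply mul_nonpos_of_nonneg_of_nonpos (Real.exp_pos _).le
      linarith [(abs_le.1 (key t (interior_subset ht))).2]
  have fin : ∀ k t : ℝ, k * (t0 - t) ≤ C * T → Real.exp (k * t) * (v t ^ 2 + b ^ 2) ≤ Real.exp (k * t0) * (v t0 ^ 2 + b ^ 2) →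
      v t ^ 2 ≤ (v t0 ^ 2 + b ^ 2) * Real.exp (C * T) := by
    intro k t hk h
    have e : Real.exp (k * t0) = Real.exp (k * t) * Real.exp (k * (t0 - t)) := by rw [← Real.exp_add]; ring_nf
    rw [e, mul_assoc] at h
    have h' := le_of_mul_le_mul_left h (Real.exp_pos _)
    have h3 := Real.exp_le_exp.2 hk
    have h4 : 0 ≤ v t0 ^ 2 + b ^ 2 := by positivity
    nlinarith [sq_nonneg b]
  intro t ht
  rcases le_total t t0 with h | h
  · exact fin C t (by apply mul_le_mul_of_nonneg_left _ hC0; linarith [ht.1, ht0.2]) (hm ht ht0 h)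
  · refine fin (-C) t ?_ (ha ht0 ht h)
    have : C * (t - t0) ≤ C * T := by apply mul_le_mul_of_nonneg_left _ hC0; linarith [ht.2, ht0.1]
    linarith

theorem exist_aux (δ δ' : ℝ → ℝ)
    (hδd : ∀ r > (0 : ℝ), HasDerivAt δ (δ' r) r) (hδ'c : ContinuousOn δ' (Ioi 0))
    (hδ0 : ∀ r > (0 : ℝ), 0 ≤ δ r) (D : ℝ) (hδb : ∀ r > (0 : ℝ), δ r ≤ D)
    (rA rB T : ℝ) (hrA : 0 < rA) (hrB : 0 < rB) (hT : 0 < T) :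
    ∃ r r' : ℝ → ℝ, Kepler1DOn δ (Icc (-T) 0) r r' ∧ r (-T) = rA ∧ r 0 = rB := by
  have hD : 0 ≤ D := (hδ0 1 one_pos).trans (hδb 1 one_pos)
  set ε := min rA rB with hε
  have hε0 : 0 < ε := lt_min hrA hrB
  set b := 1 / ε ^ 2 with hb
  have hb0 : 0 < b := by positivity
  set m := (rB - rA) / T with hm
  set X := (m ^ 2 + b ^ 2) * Real.exp ((2 * D + 1) * T) with hX
  have hX0 : m ^ 2 ≤ X := by
    have : 1 ≤ Real.exp ((2 * D + 1) * T) := Real.one_le_exp (by positivity)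
    have h4 : 0 ≤ m ^ 2 + b ^ 2 := by positivity
    nlinarith [sq_nonneg b]
  set N := X + 1 with hN
  have habs : ∀ x : ℝ, x ^ 2 ≤ X → |x| < N := by
    intro x hx
    rw [← sq_abs] at hx
    nlinarith [sq_nonneg (|x| - 1)]
  have hmN := habs m hX0
  have hN0 : 0 < N := lt_of_le_of_lt (abs_nonneg _) hmN
  set M := rA + N * T with hM
  have hεM : ε ≤ M := (min_le_left _ _).trans (by have := mul_pos hN0 hT; linarith)
  have hNN : -N ≤ N := by linarith
  set c : ℝ → ℝ := fun x => (projIcc (-N) N hNN x : ℝ) with hc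
  set d : ℝ → ℝ := fun x => (projIcc ε M hεM x : ℝ) with hd
  have hdm : ∀ x, d x ∈ Icc ε M := fun x => (projIcc ε M hεM x).2
  have hd0 : ∀ x, 0 < d x := fun x => hε0.trans_le (hdm x).1
  have hcN : ∀ x, |c x| ≤ N := fun x => abs_le.2 (projIcc (-N) N hNN x).2
  have hcx : ∀ x, |c x| ≤ |x| := by
    intro x
    simp only [hc, coe_projIcc]
    apply abs_le.2
    constructor
    · rcases le_total N x with h | h
      · rw [min_eq_left h]; exact le_trans (by linarith [abs_nonneg x]) (le_max_right _ _)
      · rw [min_eq_right h]; exact (neg_abs_le x).trans (le_max_right _ _)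
    · apply max_le (by linarith [abs_nonneg x]) ((min_le_right _ _).trans (le_abs_self x))
  have hceq : ∀ x, |x| ≤ N → c x = x := by
    intro x hx; simp only [hc]; rw [projIcc_of_mem _ (abs_le.1 hx)]
  have hcp : ∀ x, N ≤ x → c x = N := by
    intro x hx; simp only [hc]; rw [projIcc_of_right_le _ hx]
  have hcm : ∀ x, x ≤ -N → c x = -N := by
    intro x hx; simp only [hc]; rw [projIcc_of_le_left _ hx]
  have hinv : ∀ x, |x| < N ∨ c x = N ∨ c x = -N := by
    intro x
    by_cases h : |x| < N
    · exact Or.inl h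
    · push Not at h
      rcases le_abs.1 h with h | h
      · exact Or.inr (Or.inl (hcp x h))
      · exact Or.inr (Or.inr (hcm x (by linarith)))
  have hcinv : ∀ x, |c x| < N → c x = x := by
    intro x hx
    rcases hinv x with h | h | h
    · exact hceq x h.le
    · rw [h, abs_of_pos hN0] at hx; exact absurd hx (lt_irrefl _)
    · rw [h, abs_neg, abs_of_pos hN0] at hx; exact absurd hx (lt_irrefl _)
  have hc1 : ∀ x y, |c x - c y| ≤ |x - y| := fun x y => abs_projIcc_sub_projIcc hNN
  have hd1 : ∀ x y, |d x - d y| ≤ |x - y| := fun x y => abs_projIcc_sub_projIcc hεM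
  obtain ⟨K1, hK1, hl1⟩ := lip_aux δ δ' hδd hδ'c ε M hε0
  obtain ⟨K2, hK2, hl2⟩ := lip_aux (fun x => (x ^ 2)⁻¹) (fun x => -(2 * x) / (x ^ 2) ^ 2)
    (fun x hx => by
      have := (hasDerivAt_pow 2 x).inv (by positivity)
      refine HasDerivAt.congr_deriv this ?_
      simp)
    (by
      apply ContinuousOn.div (by fun_prop) (by fun_prop)
      intro x hx; have : 0 < x := hx
      positivity) ε M hε0
  set G : ℝ → ℝ → ℝ := fun x v => -(δ (d x)) * c v - 1 / (d x) ^ 2 with hG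
  have hbd : ∀ x, 0 < 1 / d x ^ 2 ∧ 1 / d x ^ 2 ≤ b := by
    intro x
    have := hd0 x
    refine ⟨by positivity, ?_⟩
    apply one_div_le_one_div_of_le (by positivity)
    exact pow_le_pow_left₀ hε0.le (hdm x).1 2
  have hGb : ∀ x v, |G x v| ≤ D * |c v| + b := by
    intro x v
    simp only [hG]
    refine (abs_sub _ _).trans (add_le_add ?_ ?_)
    · rw [abs_mul, abs_neg, abs_of_nonneg (hδ0 _ (hd0 x))]
      exact mul_le_mul_of_nonneg_right (hδb _ (hd0 x)) (abs_nonneg _)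
    · rw [abs_of_pos (hbd x).1]; exact (hbd x).2
  obtain ⟨r, v, hr, hv, hrTA, hr0B⟩ := shoot_aux c G N (N + D * N + b) (1 + D + N * K1 + K2) T rA rB hN0.le
    (by have := mul_nonneg hD hN0.le; linarith) (by have := mul_nonneg hN0.le hK1; linarith) hT hc1 hcN hcp hcm
    (fun x v => (hGb x v).trans (by have := mul_le_mul_of_nonneg_left (hcN v) hD; linarith))
    (by
      intro x v y u
      set z := max |x - y| |v - u| with hz
      have hz1 : |x - y| ≤ z := le_max_left _ _
      have hz2 : |v - u| ≤ z := le_max_right _ _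
      have hz0 : 0 ≤ z := (abs_nonneg _).trans hz1
      have e : G x v - G y u = -(δ (d x)) * (c v - c u) + (-(c u)) * (δ (d x) - δ (d y)) + -(((d x)^2)⁻¹ - ((d y)^2)⁻¹) := by
        simp only [hG]; ring
      have a1 : |-(δ (d x)) * (c v - c u)| ≤ D * z := by
        rw [abs_mul, abs_neg, abs_of_nonneg (hδ0 _ (hd0 x))]
        exact mul_le_mul (hδb _ (hd0 x)) ((hc1 _ _).trans hz2) (abs_nonneg _) hD
      have a2 : |(-(c u)) * (δ (d x) - δ (d y))| ≤ N * (K1 * z) := by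
        rw [abs_mul, abs_neg]
        refine mul_le_mul (hcN u) ((hl1 _ (hdm x) _ (hdm y)).trans ?_) (abs_nonneg _) hN0.le
        exact mul_le_mul_of_nonneg_left ((hd1 _ _).trans hz1) hK1
      have a3 : |-(((d x)^2)⁻¹ - ((d y)^2)⁻¹)| ≤ K2 * z := by
        rw [abs_neg]
        exact (hl2 _ (hdm x) _ (hdm y)).trans (mul_le_mul_of_nonneg_left ((hd1 _ _).trans hz1) hK2)
      rw [e]
      have := abs_add_three (-(δ (d x)) * (c v - c u)) ((-(c u)) * (δ (d x) - δ (d y))) (-(((d x)^2)⁻¹ - ((d y)^2)⁻¹))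
      nlinarith)
    (by
      have : rB - rA = m * T := by simp only [hm]; field_simp
      rw [this, abs_mul, abs_of_pos hT]
      exact mul_le_mul_of_nonneg_right hmN.le hT.le)
  -- lower bound
  have hlow : ∀ t ∈ Icc (-T) 0, ε ≤ r t := by
    have h := lower_aux c r v (fun t => G (r t) (v t)) N T hT
      (fun x hx => by
        have := hcinv x (by rw [hx, abs_zero]; exact hN0)
        rw [← this, hx])
      (fun x hx => by
        simp only [hc, coe_projIcc]
        exact max_lt (by linarith) ((min_le_right _ _).trans_lt hx))
      hr hv
      (fun t ht h0 => by
        simp only [hG, h0]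
        rw [hceq 0 (by simpa using hN0.le)]
        have := (hbd (r t)).1
        linarith)
    rw [hrTA, hr0B] at h
    exact h
  have hup : ∀ t ∈ Icc (-T) 0, r t ≤ M := by
    intro t ht
    have := (convex_Icc (-T) 0).norm_image_sub_le_of_norm_hasDerivWithin_le hr (fun z _ => hcN _) (left_mem_Icc.2 (by linarith)) ht
    rw [Real.norm_eq_abs, Real.norm_eq_abs, hrTA, abs_of_nonneg (by linarith [ht.1] : 0 ≤ t - -T)] at this
    have h2 := (abs_le.1 this).2
    have h3 : N * (t - -T) ≤ N * T := mul_le_mul_of_nonneg_left (by linarith [ht.2]) hN0.le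
    linarith
  have hdr : ∀ t ∈ Icc (-T) 0, d (r t) = r t := by
    intro t ht; simp only [hd]; rw [projIcc_of_mem _ ⟨hlow t ht, hup t ht⟩]
  -- velocity bound
  obtain ⟨t0, ht0, he⟩ := exists_hasDerivAt_eq_slope r (fun t => c (v t)) (by linarith : -T < 0)
    (fun t ht => (hr t ht).continuousWithinAt)
    (fun x hx => (hr x (Ioo_subset_Icc_self hx)).hasDerivAt (Icc_mem_nhds hx.1 hx.2))
  have he' : c (v t0) = m := by rw [he, hrTA, hr0B, hm]; congr 1; ring
  have hv0 : v t0 = m := by rw [← hcinv (v t0) (by rw [he']; exact hmN), he']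
  have hgr := gron_aux v (fun t => G (r t) (v t)) D b T t0 hT hD hb0.le hv
    (fun t ht => (hGb _ _).trans (by have := mul_le_mul_of_nonneg_left (hcx (v t)) hD; linarith)) (Ioo_subset_Icc_self ht0)
  have hcv : ∀ t ∈ Icc (-T) 0, c (v t) = v t := by
    intro t ht
    have := hgr t ht
    rw [hv0] at this
    exact hceq _ (habs _ this).le
  refine ⟨r, v, ⟨fun t ht => hε0.trans_le (hlow t ht), fun t ht => ?_, fun t ht => ?_⟩, hrTA, hr0B⟩
  · have := hr t ht; rwa [hcv t ht] at this
  · have := hv t ht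
    simp only [hG] at this
    rwa [hcv t ht, hdr t ht] at this

theorem stmt7 (δ δ' : ℝ → ℝ)
    (hδd : ∀ r > (0 : ℝ), HasDerivAt δ (δ' r) r) (hδ'c : ContinuousOn δ' (Ioi 0))
    (hδ0 : ∀ r > (0 : ℝ), 0 ≤ δ r) (Dstar : ℝ) (hδb : ∀ r > (0 : ℝ), δ r ≤ Dstar)
    (rA rB T : ℝ) (hrA : 0 < rA) (hrB : 0 < rB) (hT : 0 < T) :
    (∃ r r' : ℝ → ℝ, Kepler1DOn δ (Icc (-T) 0) r r' ∧ r (-T) = rA ∧ r 0 = rB) ∧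
    (∀ r r' q q' : ℝ → ℝ,
      Kepler1DOn δ (Icc (-T) 0) r r' → Kepler1DOn δ (Icc (-T) 0) q q' →
      r (-T) = rA → r 0 = rB → q (-T) = rA → q 0 = rB →
      ∀ t ∈ Icc (-T) 0, r t = q t) := by
  refine ⟨exist_aux δ δ' hδd hδ'c hδ0 Dstar hδb rA rB T hrA hrB hT, ?_⟩
  intro r r' q q' hr hq h1 h2 h3 h4
  exact uniq_aux δ Dstar T hT (fun x hx => (hδd x hx).continuousAt.continuousWithinAt) hδ0 hδb r r' q q'
    hr.1 hq.1 hr.2.1 hq.2.1 hr.2.2 hq.2.2 (h1.trans h3.symm) (h2.trans h4.symm)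
end

section
/- Let δ : ]0,∞[ → ℝ be continuous, nonnegative and bounded, and let r : ]α,ω[ → ]0,∞[ be a maximal solution of r̈ + δ(r)ṙ = -1/r² with α > -∞. Then lim_{t→α⁺} r(t) = 0. -/
open Set Filter

/-- Primitive of a continuous function on an open interval. -/
theorem exists_primitive (s : Set ℝ) (hs : IsOpen s) (hc : s.OrdConnected) (f : ℝ → ℝ)
    (hf : ContinuousOn f s) : ∃ F : ℝ → ℝ, ∀ x ∈ s, HasDerivAt F (f x) x := by
  rcases s.eq_empty_or_nonempty with h | ⟨a, ha⟩
  · exact ⟨0, by simp [h]⟩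
  refine ⟨fun u => ∫ x in a..u, f x, fun x hx => ?_⟩
  apply intervalIntegral.integral_hasDerivAt_right
  · exact (hf.mono (hc.uIcc_subset ha hx)).intervalIntegrable
  · exact hf.stronglyMeasurableAtFilter hs x hx
  · exact hf.continuousAt (hs.mem_nhds hx)

theorem anti_of_deriv {a b : ℝ} {f f' : ℝ → ℝ} (hf : ∀ t ∈ Ioo a b, HasDerivAt f (f' t) t)
    (h : ∀ t ∈ Ioo a b, f' t ≤ 0) : AntitoneOn f (Ioo a b) := by
  apply antitoneOn_of_deriv_nonpos (convex_Ioo a b)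
  · exact fun t ht => (hf t ht).continuousAt.continuousWithinAt
  · rw [interior_Ioo]
    exact fun t ht => (hf t ht).differentiableAt.differentiableWithinAt
  · rw [interior_Ioo]
    intro t ht
    rw [(hf t ht).deriv]
    exact h t ht

theorem anti_lim {a b M : ℝ} (hab : a < b) {f f' : ℝ → ℝ}
    (hf : ∀ t ∈ Ioo a b, HasDerivAt f (f' t) t)
    (h : ∀ t ∈ Ioo a b, f' t ≤ 0) (hM : ∀ t ∈ Ioo a b, -M ≤ f' t) :
    ∃ L, Tendsto f (nhdsWithin a (Ioi a)) (nhds L) ∧ ∀ t ∈ Ioo a b, f t ≤ L := by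
  have h1 := anti_of_deriv hf h
  have h2 : AntitoneOn (fun t => -f t - M * t) (Ioo a b) := by
    apply anti_of_deriv (f' := fun t => -f' t - M * 1)
    · exact fun t ht => (hf t ht).neg.sub ((hasDerivAt_id t).const_mul M)
    · intro t ht
      have := hM t ht
      linarith
  obtain ⟨m, hm⟩ : (Ioo a b).Nonempty := nonempty_Ioo.2 hab
  have hM0 : 0 ≤ M := by linarith [h m hm, hM m hm]
  have hb : BddAbove (f '' Ioo a b) := by
    refine ⟨f m + M * (b - a), ?_⟩
    rintro _ ⟨t, ht, rfl⟩
    rcases le_total t m with htm | htm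
    · have := h2 ht hm htm
      simp only at this
      have h3 : M * (m - t) ≤ M * (b - a) :=
        mul_le_mul_of_nonneg_left (by linarith [ht.1, hm.2]) hM0
      linarith
    · have := h1 hm ht htm
      have : 0 ≤ M * (b - a) := mul_nonneg hM0 (by linarith)
      linarith
  exact ⟨_, h1.tendsto_nhdsWithin_Ioo_right ⟨m, hm⟩ hb,
    fun t ht => le_csSup hb (mem_image_of_mem f ht)⟩

/-- Gluing two differentiable functions at a point. -/
theorem glue {a b c : ℝ} (hab : a < b) (hca : c < a) {f g f' g' : ℝ → ℝ}
    (hf : ∀ t ∈ Ioc c a, HasDerivAt f (f' t) t) (hg : ∀ t ∈ Ioo a b, HasDerivAt g (g' t) t)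
    (hgl : Tendsto g (nhdsWithin a (Ioi a)) (nhds (f a)))
    (hgl' : Tendsto g' (nhdsWithin a (Ioi a)) (nhds (f' a))) :
    ∀ t ∈ Ioo c b, HasDerivAt (fun t => if t ≤ a then f t else g t)
      (if t ≤ a then f' t else g' t) t := by
  have key : ∀ t ∈ Ioo a b, HasDerivAt (fun t => if t ≤ a then f t else g t) (g' t) t := by
    intro t ht
    apply (hg t ht).congr_of_eventuallyEq
    filter_upwards [Ioi_mem_nhds ht.1] with s hs
    simp [not_le.2 (mem_Ioi.1 hs)]
  intro t ht
  rcases lt_trichotomy t a with h | h | h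
  · rw [if_pos h.le]
    apply (hf t ⟨ht.1, h.le⟩).congr_of_eventuallyEq
    filter_upwards [Iio_mem_nhds h] with s hs
    simp [(mem_Iio.1 hs).le]
  · subst h
    rw [if_pos le_rfl]
    have hmem : Ioo t b ∈ nhdsWithin t (Ioi t) := Ioo_mem_nhdsGT hab
    have hR : HasDerivWithinAt (fun s => if s ≤ t then f s else g s) (f' t) (Ici t) t := by
      apply hasDerivWithinAt_Ici_of_tendsto_deriv (s := Ioo t b)
      · exact fun s hs => (key s hs).differentiableAt.differentiableWithinAt
      · unfold ContinuousWithinAt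
        simp only [le_refl, if_true]
        refine (hgl.mono_left (nhdsWithin_mono _ Ioo_subset_Ioi_self)).congr' ?_
        filter_upwards [self_mem_nhdsWithin] with s hs
        simp [not_le.2 hs.1]
      · exact hmem
      · refine hgl'.congr' ?_
        filter_upwards [hmem] with s hs
        exact (key s hs).deriv.symm
    have hL : HasDerivWithinAt (fun s => if s ≤ t then f s else g s) (f' t) (Iic t) t := by
      apply (hf t ⟨ht.1, le_rfl⟩).hasDerivWithinAt.congr
      · intro s hs
        simp [mem_Iic.1 hs]
      · simp
    have := hL.union hR
    rwa [Iic_union_Ici, hasDerivWithinAt_univ] at this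
  · rw [if_neg (not_le.2 h)]
    exact key t ⟨h, ht.2⟩

/-- A solution with a positive finite limit at `α` extends to the left. -/
theorem extend_left (δ : ℝ → ℝ) (hδc : ContinuousOn δ (Ioi 0))
    (α ω : ℝ) (hαω : α < ω) (r r' : ℝ → ℝ)
    (h0 : ∀ t ∈ Ioo α ω, 0 < r t) (h1 : ∀ t ∈ Ioo α ω, HasDerivAt r (r' t) t)
    (h2 : ∀ t ∈ Ioo α ω, HasDerivAt r' (-(δ (r t)) * r' t - 1 / (r t) ^ 2) t)
    (L : ℝ) (hL : 0 < L) (hlim : Tendsto r (nhdsWithin α (Ioi α)) (nhds L)) :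
    ∃ (a' b' : ℝ) (q q' : ℝ → ℝ), a' ≤ α ∧ ω ≤ b' ∧ (a' < α ∨ ω < b') ∧
      Kepler1DOn δ (Ioo a' b') q q' ∧ ∀ t ∈ Ioo α ω, q t = r t := by
  obtain ⟨Δ, hΔ⟩ := exists_primitive (Ioi 0) isOpen_Ioi ordConnected_Ioi δ hδc
  have hΔC : ContDiffOn ℝ 1 Δ (Ioi 0) := by
    rw [contDiffOn_one_iff_derivWithin isOpen_Ioi.uniqueDiffOn]
    refine ⟨fun x hx => (hΔ x hx).differentiableAt.differentiableWithinAt, hδc.congr ?_⟩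
    intro x hx
    rw [derivWithin_of_isOpen isOpen_Ioi hx, (hΔ x hx).deriv]
  have hw : ∀ t ∈ Ioo α ω, HasDerivAt (fun t => r' t + Δ (r t)) (-(1 / r t ^ 2)) t := by
    intro t ht
    have := (h2 t ht).add ((hΔ (r t) (h0 t ht)).comp t (h1 t ht))
    exact this.congr_deriv (by ring)
  -- limit of w
  obtain ⟨W, hW⟩ : ∃ W, Tendsto (fun t => r' t + Δ (r t)) (nhdsWithin α (Ioi α)) (nhds W) := by
    have hev : ∀ᶠ t in nhdsWithin α (Ioi α), L / 2 < r t :=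
      hlim.eventually_const_lt (by linarith)
    obtain ⟨b, hb, hbs⟩ := (mem_nhdsGT_iff_exists_Ioo_subset).1 hev
    have hb : α < b := hb
    have hsub : Ioo α (min b ω) ⊆ Ioo α ω := Ioo_subset_Ioo_right (min_le_right _ _)
    obtain ⟨W, hW, -⟩ := anti_lim (M := 1 / (L / 2) ^ 2) (lt_min hb hαω)
      (fun t ht => hw t (hsub ht))
      (fun t ht => by
        have := h0 t (hsub ht)
        have : 0 < 1 / r t ^ 2 := by positivity
        linarith)
      (fun t ht => by
        have h3 : L / 2 < r t := hbs ⟨ht.1, ht.2.trans_le (min_le_left _ _)⟩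
        apply neg_le_neg
        gcongr)
    exact ⟨W, hW⟩
  -- local solution of the C¹ system
  have hv : ContDiffAt ℝ 1 (fun p : ℝ × ℝ => (p.2 - Δ p.1, -(1 / p.1 ^ 2))) (L, W) := by
    have hD : ContDiffAt ℝ 1 (fun p : ℝ × ℝ => Δ p.1) (L, W) :=
      ContDiffAt.comp (g := Δ) (L, W) (hΔC.contDiffAt (Ioi_mem_nhds hL)) contDiffAt_fst
    apply ContDiffAt.prodMk
    · exact contDiffAt_snd.sub hD
    · exact (contDiffAt_const.div (contDiffAt_fst.pow 2) (by positivity)).neg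
  obtain ⟨y, hy0, ε, hε, hy⟩ :=
    hv.exists_forall_mem_closedBall_exists_eq_forall_mem_Ioo_hasDerivAt₀ α
  have hyα := hy α ⟨by linarith, by linarith⟩
  have hpos : ∀ᶠ t in nhds α, 0 < (y t).1 := by
    apply (continuous_fst.continuousAt.comp hyα.continuousAt).eventually_const_lt
    simp [hy0, hL]
  obtain ⟨η, hη, hηs⟩ := Metric.eventually_nhds_iff.1 hpos
  set κ := min ε η / 2 with hκ
  have hκ0 : 0 < κ := by positivity
  have hκε : κ < ε := by have := min_le_left ε η; linarith
  have hκη : κ < η := by have := min_le_right ε η; linarith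
  have hyt : ∀ t ∈ Ioc (α - κ) α, HasDerivAt y ((y t).2 - Δ (y t).1, -(1 / (y t).1 ^ 2)) t :=
    fun t ht => hy t ⟨by linarith [ht.1], by linarith [ht.2]⟩
  have hyp : ∀ t ∈ Ioc (α - κ) α, 0 < (y t).1 := by
    intro t ht
    apply hηs
    rw [Real.dist_eq, abs_lt]
    exact ⟨by linarith [ht.1], by linarith [ht.2]⟩
  have hΔlim : Tendsto (fun t => Δ (r t)) (nhdsWithin α (Ioi α)) (nhds (Δ L)) :=
    (hΔ L hL).continuousAt.tendsto.comp hlim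
  have hr'lim : Tendsto r' (nhdsWithin α (Ioi α)) (nhds (W - Δ L)) := by
    simpa using hW.sub hΔlim
  have hG1 := glue hαω (by linarith : α - κ < α) (f := fun t => (y t).1)
    (f' := fun t => (y t).2 - Δ (y t).1) (g := r) (g' := r')
    (fun t ht => (hyt t ht).fst) h1 (by simpa [hy0] using hlim)
    (by simpa [hy0] using hr'lim)
  have hG2 := glue hαω (by linarith : α - κ < α) (f := fun t => (y t).2)
    (f' := fun t => -(1 / (y t).1 ^ 2)) (g := fun t => r' t + Δ (r t))
    (g' := fun t => -(1 / r t ^ 2))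
    (fun t ht => (hyt t ht).snd) hw (by simpa [hy0] using hW)
    (by
      simp only [hy0]
      exact (tendsto_const_nhds.div (hlim.pow 2) (by positivity)).neg)
  set Q : ℝ → ℝ := fun t => if t ≤ α then (y t).1 else r t with hQ
  set V : ℝ → ℝ := fun t => if t ≤ α then (y t).2 else r' t + Δ (r t) with hV
  have hQpos : ∀ t ∈ Ioo (α - κ) ω, 0 < Q t := by
    intro t ht
    by_cases h : t ≤ α
    · simpa [hQ, h] using hyp t ⟨ht.1, h⟩
    · simpa [hQ, h] using h0 t ⟨not_le.1 h, ht.2⟩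
  have hQd : ∀ t ∈ Ioo (α - κ) ω, HasDerivAt Q (V t - Δ (Q t)) t := by
    intro t ht
    convert hG1 t ht using 1
    by_cases h : t ≤ α <;> simp [hQ, hV, h]
  have hVd : ∀ t ∈ Ioo (α - κ) ω, HasDerivAt V (-(1 / Q t ^ 2)) t := by
    intro t ht
    convert hG2 t ht using 1
    by_cases h : t ≤ α <;> simp [hQ, h]
  refine ⟨α - κ, ω, Q, fun t => V t - Δ (Q t), by linarith, le_rfl, Or.inl (by linarith),
    ⟨hQpos, fun t ht => (hQd t ht).hasDerivWithinAt, fun t ht => ?_⟩, fun t ht => ?_⟩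
  · have := (hVd t ht).sub ((hΔ (Q t) (hQpos t ht)).comp t (hQd t ht))
    exact (this.congr_deriv (by ring)).hasDerivWithinAt
  · simp [hQ, not_le.2 ht.1]

/-- If a maximal solution of the 1D damped Kepler equation on `]α,ω[` has `α > -∞`,
then `r(t) → 0` as `t → α⁺`. -/
theorem stmt12 (δ : ℝ → ℝ) (hδc : ContinuousOn δ (Ioi 0))
    (hδ0 : ∀ s > (0 : ℝ), 0 ≤ δ s) (Dstar : ℝ) (hδb : ∀ s > (0 : ℝ), δ s ≤ Dstar)
    (α ω : ℝ) (hαω : α < ω)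
    (r r' : ℝ → ℝ) (hsol : Kepler1DOn δ (Ioo α ω) r r')
    (hmax : ¬∃ (a' b' : ℝ) (q q' : ℝ → ℝ), a' ≤ α ∧ ω ≤ b' ∧ (a' < α ∨ ω < b') ∧
      Kepler1DOn δ (Ioo a' b') q q' ∧ ∀ t ∈ Ioo α ω, q t = r t) :
    Tendsto r (nhdsWithin α (Ioi α)) (nhds 0) := by
  obtain ⟨h0, h1', h2'⟩ := hsol
  have h1 : ∀ t ∈ Ioo α ω, HasDerivAt r (r' t) t :=
    fun t ht => (h1' t ht).hasDerivAt (isOpen_Ioo.mem_nhds ht)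
  have h2 : ∀ t ∈ Ioo α ω, HasDerivAt r' (-(δ (r t)) * r' t - 1 / (r t) ^ 2) t :=
    fun t ht => (h2' t ht).hasDerivAt (isOpen_Ioo.mem_nhds ht)
  obtain ⟨L, hL0, hL⟩ : ∃ L, 0 ≤ L ∧ Tendsto r (nhdsWithin α (Ioi α)) (nhds L) := by
    by_cases hA : ∃ t₀ ∈ Ioo α ω, 0 ≤ r' t₀
    · obtain ⟨t₀, ht₀, hr0⟩ := hA
      have hcont : ContinuousOn (fun t => δ (r t)) (Ioo α ω) :=
        hδc.comp (fun t ht => (h1 t ht).continuousAt.continuousWithinAt) h0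
      obtain ⟨E, hE⟩ := exists_primitive _ isOpen_Ioo ordConnected_Ioo _ hcont
      have hp : AntitoneOn (fun t => Real.exp (E t) * r' t) (Ioo α ω) := by
        apply anti_of_deriv (f' := fun t => -(Real.exp (E t) * (1 / r t ^ 2)))
        · intro t ht
          exact ((hE t ht).exp.mul (h2 t ht)).congr_deriv (by ring)
        · intro t ht
          have := h0 t ht
          have : 0 < Real.exp (E t) * (1 / r t ^ 2) := by positivity
          linarith
      have hr' : ∀ t ∈ Ioo α t₀, 0 ≤ r' t := by
        intro t ht
        have := hp ⟨ht.1, ht.2.trans ht₀.2⟩ ht₀ ht.2.le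
        simp only at this
        have h3 : 0 ≤ Real.exp (E t₀) * r' t₀ := by positivity
        exact (mul_nonneg_iff_of_pos_left (Real.exp_pos (E t))).1 (h3.trans this)
      have hsub : Ioo α t₀ ⊆ Ioo α ω := Ioo_subset_Ioo_right ht₀.2.le
      have han := anti_of_deriv (fun t ht => (h1 t (hsub ht)).neg)
        (fun t ht => by simpa using hr' t ht)
      have hmono : MonotoneOn r (Ioo α t₀) := by
        intro s hs t ht hst
        simpa using han hs ht hst
      have hlb : ∀ x ∈ r '' Ioo α t₀, 0 ≤ x := by
        rintro _ ⟨t, ht, rfl⟩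
        exact (h0 t (hsub ht)).le
      exact ⟨_, Real.sInf_nonneg hlb,
        hmono.tendsto_nhdsWithin_Ioo_right (nonempty_Ioo.2 ht₀.1) ⟨0, hlb⟩⟩
    · push Not at hA
      obtain ⟨t₀, ht₀⟩ : (Ioo α ω).Nonempty := nonempty_Ioo.2 hαω
      have hD0 : 0 ≤ Dstar := (hδ0 1 one_pos).trans (hδb 1 one_pos)
      have hG : AntitoneOn (fun t => Real.exp (Dstar * t) * r' t) (Ioo α ω) := by
        apply anti_of_deriv
          (f' := fun t => Real.exp (Dstar * t) * ((Dstar - δ (r t)) * r' t - 1 / r t ^ 2))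
        · intro t ht
          exact (((hasDerivAt_id t).const_mul Dstar).exp.mul (h2 t ht)).congr_deriv
            (by simp only [id]; ring)
        · intro t ht
          have h3 := h0 t ht
          have h4 : 0 < 1 / r t ^ 2 := by positivity
          have h5 : (Dstar - δ (r t)) * r' t ≤ 0 :=
            mul_nonpos_of_nonneg_of_nonpos (by linarith [hδb _ h3]) (hA t ht).le
          exact mul_nonpos_of_nonneg_of_nonpos (Real.exp_pos _).le (by linarith)
      have hsub : Ioo α t₀ ⊆ Ioo α ω := Ioo_subset_Ioo_right ht₀.2.le
      obtain ⟨L, hL, hLe⟩ := anti_lim (M := Real.exp (Dstar * (t₀ - α)) * (-r' t₀)) ht₀.1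
        (fun t ht => h1 t (hsub ht)) (fun t ht => (hA t (hsub ht)).le)
        (fun t ht => by
          have h3 := hG (hsub ht) ht₀ ht.2.le
          simp only at h3
          have h4 : Real.exp (Dstar * t₀) = Real.exp (Dstar * t) * Real.exp (Dstar * (t₀ - t)) := by
            rw [← Real.exp_add]
            congr 1
            ring
          rw [h4, mul_assoc] at h3
          have h5 := le_of_mul_le_mul_left h3 (Real.exp_pos _)
          have h6 : Real.exp (Dstar * (t₀ - t)) ≤ Real.exp (Dstar * (t₀ - α)) :=
            Real.exp_le_exp.2 (mul_le_mul_of_nonneg_left (by linarith [ht.1]) hD0)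
          have h7 := mul_le_mul_of_nonneg_right h6 (neg_nonneg.2 (hA t₀ ht₀).le)
          linarith)
      obtain ⟨m, hm⟩ : (Ioo α t₀).Nonempty := nonempty_Ioo.2 ht₀.1
      exact ⟨L, (h0 m (hsub hm)).le.trans (hLe m hm), hL⟩
  rcases hL0.eq_or_lt with h | h
  · rwa [h]
  · exact absurd (extend_left δ hδc α ω hαω r r' h0 h1 h2 L h hL) hmax
end

section
/- Let δ : ]0,∞[ → ℝ be continuous, nonnegative and bounded, and let r : ]α,ω[ → ]0,∞[ be a maximal solution of r̈ + δ(r)ṙ = -1/r² with α > -∞. Then lim_{t→α⁺} r(t)/(t-α)^{2/3} = (9/2)^{1/3}. -/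
open Set Filter

open Topology in
lemma k_glue {R r g : ℝ → ℝ} {e α ω : ℝ} (h : α < ω) (hR : HasDerivAt R e α)
    (hr : ∀ t ∈ Ioo α ω, HasDerivAt r (g t) t) (hl : Tendsto r (𝓝[>] α) (𝓝 (R α)))
    (hg : Tendsto g (𝓝[>] α) (𝓝 e)) :
    HasDerivAt (fun t => if t ≤ α then R t else r t) e α := by
  have h1 : HasDerivWithinAt (fun t => if t ≤ α then R t else r t) e (Iic α) α := by
    refine hR.hasDerivWithinAt.congr (fun x hx => ?_) (by simp)
    simp only [mem_Iic] at hx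
    simp [hx]
  have hd : ∀ t ∈ Ioo α ω, HasDerivAt (fun t => if t ≤ α then R t else r t) (g t) t := by
    intro t ht
    refine (hr t ht).congr_of_eventuallyEq ?_
    filter_upwards [Ioi_mem_nhds ht.1] with x hx
    simp only [mem_Ioi] at hx
    simp [not_le.2 hx]
  have h2 : HasDerivWithinAt (fun t => if t ≤ α then R t else r t) e (Ici α) α := by
    apply hasDerivWithinAt_Ici_of_tendsto_deriv (s := Ioo α ω)
    · exact fun t ht => (hd t ht).differentiableAt.differentiableWithinAt
    · unfold ContinuousWithinAt
      simp only [le_refl, if_true]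
      refine (hl.mono_left (nhdsWithin_mono _ Ioo_subset_Ioi_self)).congr' ?_
      filter_upwards [self_mem_nhdsWithin] with x hx
      simp [not_le.2 hx.1]
    · exact Ioo_mem_nhdsGT h
    · refine hg.congr' ?_
      filter_upwards [Ioo_mem_nhdsGT h] with x hx
      exact (hd x hx).deriv.symm
  have := h1.union h2
  rwa [Iic_union_Ici, hasDerivWithinAt_univ] at this

lemma k_mono {f f' : ℝ → ℝ} {a b : ℝ} (hf : ∀ t ∈ Ioo a b, HasDerivAt f (f' t) t)
    (h0 : ∀ t ∈ Ioo a b, 0 ≤ f' t) : MonotoneOn f (Ioo a b) := by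
  apply monotoneOn_of_deriv_nonneg (convex_Ioo a b)
  · exact fun t ht => (hf t ht).continuousAt.continuousWithinAt
  · rw [interior_Ioo]
    exact fun t ht => (hf t ht).differentiableAt.differentiableWithinAt
  · rw [interior_Ioo]
    intro t ht
    rw [(hf t ht).deriv]
    exact h0 t ht

/-- primitive of the truncated damping -/
lemma k_prim (δ : ℝ → ℝ) (hδc : ContinuousOn δ (Ioi 0)) {c : ℝ} (hc : 0 < c) :
    ∃ Δ : ℝ → ℝ, ContDiff ℝ 1 Δ ∧ ∀ s, c ≤ s → HasDerivAt Δ (δ s) s := by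
  have hcont : Continuous (fun x => δ (max x c)) := by
    apply hδc.comp_continuous (by fun_prop)
    intro x
    exact lt_of_lt_of_le hc (le_max_right _ _)
  have hd : ∀ s, HasDerivAt (fun s => ∫ x in (0:ℝ)..s, δ (max x c)) (δ (max s c)) s :=
    fun s => (hcont.integral_hasStrictDerivAt 0 s).hasDerivAt
  refine ⟨fun s => ∫ x in (0:ℝ)..s, δ (max x c), ?_, ?_⟩
  · rw [contDiff_one_iff_deriv]
    refine ⟨fun s => (hd s).differentiableAt, ?_⟩
    have : deriv (fun s => ∫ x in (0:ℝ)..s, δ (max x c)) = fun s => δ (max s c) :=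
      funext fun s => (hd s).deriv
    rw [this]; exact hcont
  · intro s hs
    have := hd s
    rwa [max_eq_left hs] at this

open Topology in
lemma k_ext (δ : ℝ → ℝ) (hδc : ContinuousOn δ (Ioi 0)) (α ω : ℝ) (hαω : α < ω)
    (r r' : ℝ → ℝ) (hpos : ∀ t ∈ Ioo α ω, 0 < r t)
    (hr : ∀ t ∈ Ioo α ω, HasDerivAt r (r' t) t)
    (hr' : ∀ t ∈ Ioo α ω, HasDerivAt r' (-(δ (r t)) * r' t - 1 / (r t) ^ 2) t)
    (r0 : ℝ) (h0 : 0 < r0) (hlim : Tendsto r (𝓝[>] α) (𝓝 r0)) :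
    ∃ (a' b' : ℝ) (q q' : ℝ → ℝ), a' ≤ α ∧ ω ≤ b' ∧ (a' < α ∨ ω < b') ∧
      Kepler1DOn δ (Ioo a' b') q q' ∧ ∀ t ∈ Ioo α ω, q t = r t := by
  obtain ⟨Δ, hΔ, hΔd⟩ := k_prim δ hδc (half_pos h0)
  have hΔc : Continuous Δ := hΔ.continuous
  -- the momentum converges
  obtain ⟨b, hb, hbs⟩ : ∃ b ∈ Ioi α, Ioo α b ⊆ {t | r0 / 2 < r t} :=
    mem_nhdsGT_iff_exists_Ioo_subset.1 (hlim.eventually (Ioi_mem_nhds (half_lt_self h0)))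
  simp only [mem_Ioi] at hb
  set c := min b ω with hc
  have hαc : α < c := lt_min hb hαω
  have hcω : ∀ t ∈ Ioo α c, t ∈ Ioo α ω := fun t ht => ⟨ht.1, ht.2.trans_le (min_le_right _ _)⟩
  have hcb : ∀ t ∈ Ioo α c, r0 / 2 < r t := fun t ht =>
    hbs ⟨ht.1, ht.2.trans_le (min_le_left _ _)⟩
  have hp : ∀ t ∈ Ioo α c, HasDerivAt (fun t => r' t + Δ (r t)) (- (1 / (r t) ^ 2)) t := by
    intro t ht
    have h1 := (hr' t (hcω t ht)).add ((hΔd (r t) (hcb t ht).le).comp t (hr t (hcω t ht)))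
    exact h1.congr_deriv (by ring)
  have hanti : MonotoneOn (fun t => -(r' t + Δ (r t))) (Ioo α c) := by
    apply k_mono (fun t ht => (hp t ht).neg)
    intro t ht
    rw [neg_neg]; positivity
  have hmono : MonotoneOn (fun t => (r' t + Δ (r t)) + 4 / r0 ^ 2 * t) (Ioo α c) := by
    apply k_mono (fun t ht => (hp t ht).add ((hasDerivAt_id t).const_mul (4 / r0 ^ 2)))
    intro t ht
    have h1 := hcb t ht
    have : 1 / (r t) ^ 2 ≤ 1 / (r0 / 2) ^ 2 := by gcongr
    have h2 : 1 / (r0 / 2) ^ 2 = 4 / r0 ^ 2 := by field_simp; norm_num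
    linarith
  obtain ⟨t1, ht1⟩ : (Ioo α c).Nonempty := nonempty_Ioo.2 hαc
  have hsub : Ioo α t1 ⊆ Ioo α c := Ioo_subset_Ioo_right ht1.2.le
  have hplim := MonotoneOn.tendsto_nhdsWithin_Ioo_right (nonempty_Ioo.2 ht1.1) (hanti.mono hsub) (by
    refine ⟨-((r' t1 + Δ (r t1)) + 4 / r0 ^ 2 * (t1 - α)), ?_⟩
    rintro _ ⟨t, ht, rfl⟩
    have := hmono (hsub ht) ht1 ht.2.le
    have h3 : 4 / r0 ^ 2 * α ≤ 4 / r0 ^ 2 * t := by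
      have := ht.1.le
      gcongr
    simp only at this ⊢
    linarith)
  set p0 := -sInf ((fun t => -(r' t + Δ (r t))) '' Ioo α t1) with hp0
  have hplim' : Tendsto (fun t => r' t + Δ (r t)) (𝓝[>] α) (𝓝 p0) := by
    have := hplim.neg
    simp only [neg_neg] at this
    exact this
  have hr'lim : Tendsto r' (𝓝[>] α) (𝓝 (p0 - Δ r0)) := by
    have := hplim'.sub ((hΔc.tendsto r0).comp hlim)
    refine this.congr (fun t => ?_)
    simp
  -- local solution
  have hF : ContDiffAt ℝ 1 (fun x : ℝ × ℝ => (x.2 - Δ x.1, -(1 / x.1 ^ 2))) (r0, p0) := by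
    have hne : (r0, p0).1 ^ 2 ≠ 0 := by simpa using h0.ne'
    have h1 : ContDiffAt ℝ 1 (fun x : ℝ × ℝ => Δ x.1) (r0, p0) := by
      fun_prop
    have h2 : ContDiffAt ℝ 1 (fun x : ℝ × ℝ => 1 / x.1 ^ 2) (r0, p0) :=
      contDiffAt_const.div (contDiffAt_fst.pow 2) hne
    exact (contDiffAt_snd.sub h1).prodMk h2.neg
  obtain ⟨Y, hY0, ε, hε, hY⟩ :=
    hF.exists_forall_mem_closedBall_exists_eq_forall_mem_Ioo_hasDerivAt₀ α
  have hYα := hY α (by constructor <;> linarith)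
  have hev : ∀ᶠ t in 𝓝 α, r0 / 2 < (Y t).1 := by
    have : ContinuousAt (fun t => (Y t).1) α := hYα.continuousAt.fst
    refine this.eventually (Ioi_mem_nhds ?_)
    simp only [hY0]; exact half_lt_self h0
  obtain ⟨η, hη, hball⟩ := Metric.eventually_nhds_iff.1 hev
  set κ := min ε η with hκ
  have hκ0 : 0 < κ := lt_min hε hη
  have hYpos : ∀ t ∈ Ioc (α - κ) α, r0 / 2 < (Y t).1 := by
    intro t ht
    apply hball
    rw [Real.dist_eq, abs_lt]
    have := min_le_right ε η
    constructor <;> linarith [ht.1, ht.2]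
  have hYd : ∀ t ∈ Ioc (α - κ) α, HasDerivAt Y ((Y t).2 - Δ (Y t).1, -(1 / (Y t).1 ^ 2)) t := by
    intro t ht
    apply hY
    have := min_le_left ε η
    constructor <;> linarith [ht.1, ht.2]
  set R : ℝ → ℝ := fun t => (Y t).1 with hRdef
  set R' : ℝ → ℝ := fun t => (Y t).2 - Δ (Y t).1 with hR'def
  have hR : ∀ t ∈ Ioc (α - κ) α, HasDerivAt R (R' t) t := fun t ht => (hYd t ht).fst
  have hR' : ∀ t ∈ Ioc (α - κ) α, HasDerivAt R' (-(δ (R t)) * R' t - 1 / (R t) ^ 2) t := by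
    intro t ht
    have h2 : HasDerivAt (fun t => (Y t).2) (-(1 / (Y t).1 ^ 2)) t := (hYd t ht).snd
    have h1 := h2.sub ((hΔd (R t) (hYpos t ht).le).comp t (hR t ht))
    exact h1.congr_deriv (by simp only [hRdef]; ring)
  have hRα : R α = r0 := by simp [hRdef, hY0]
  have hR'α : R' α = p0 - Δ r0 := by simp [hR'def, hY0]
  have hαm : α ∈ Ioc (α - κ) α := ⟨by linarith, le_rfl⟩
  have hδlim : Tendsto (fun t => δ (r t)) (𝓝[>] α) (𝓝 (δ r0)) :=
    ((hδc.continuousAt (Ioi_mem_nhds h0)).tendsto).comp hlim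
  have hglim : Tendsto (fun t => -(δ (r t)) * r' t - 1 / (r t) ^ 2) (𝓝[>] α)
      (𝓝 (-(δ (R α)) * R' α - 1 / (R α) ^ 2)) := by
    rw [hRα, hR'α]
    exact (hδlim.neg.mul hr'lim).sub (tendsto_const_nhds.div (hlim.pow 2) (by positivity))
  have key : ∀ t ∈ Ioo (α - κ) ω,
      0 < (if t ≤ α then R t else r t) ∧
      HasDerivAt (fun t => if t ≤ α then R t else r t) (if t ≤ α then R' t else r' t) t ∧
      HasDerivAt (fun t => if t ≤ α then R' t else r' t)
        (-(δ (if t ≤ α then R t else r t)) * (if t ≤ α then R' t else r' t)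
          - 1 / (if t ≤ α then R t else r t) ^ 2) t := by
    intro t ht
    rcases lt_trichotomy t α with h | h | h
    · have hm : t ∈ Ioc (α - κ) α := ⟨ht.1, h.le⟩
      simp only [h.le, if_true]
      have hpos := hYpos t hm
      refine ⟨by linarith, (hR t hm).congr_of_eventuallyEq ?_,
        (hR' t hm).congr_of_eventuallyEq ?_⟩ <;>
      · filter_upwards [Iio_mem_nhds h] with x hx
        simp only [mem_Iio] at hx
        simp [hx.le]
    · subst h
      simp only [le_refl, if_true]
      refine ⟨by rw [hRα]; exact h0, ?_, ?_⟩
      · exact k_glue hαω (hR t hαm) hr (by rw [hRα]; exact hlim) (by rw [hR'α]; exact hr'lim)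
      · exact k_glue hαω (hR' t hαm) hr' (by rw [hR'α]; exact hr'lim) hglim
    · have hm : t ∈ Ioo α ω := ⟨h, ht.2⟩
      simp only [not_le.2 h, if_false]
      refine ⟨hpos t hm, (hr t hm).congr_of_eventuallyEq ?_,
        (hr' t hm).congr_of_eventuallyEq ?_⟩ <;>
      · filter_upwards [Ioi_mem_nhds h] with x hx
        simp only [mem_Ioi] at hx
        simp [not_le.2 hx]
  refine ⟨α - κ, ω, fun t => if t ≤ α then R t else r t, fun t => if t ≤ α then R' t else r' t,
    by linarith, le_rfl, Or.inl (by linarith), ⟨fun t ht => (key t ht).1,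
    fun t ht => (key t ht).2.1.hasDerivWithinAt, fun t ht => (key t ht).2.2.hasDerivWithinAt⟩, ?_⟩
  intro t ht
  simp [not_le.2 ht.1]


open Topology in
lemma k_bdd (δ : ℝ → ℝ) (D : ℝ) (hD : 0 ≤ D) (hδb : ∀ s > (0 : ℝ), δ s ≤ D)
    (α ω : ℝ) (hαω : α < ω)
    (r r' : ℝ → ℝ) (hpos : ∀ t ∈ Ioo α ω, 0 < r t)
    (hr : ∀ t ∈ Ioo α ω, HasDerivAt r (r' t) t)
    (hr' : ∀ t ∈ Ioo α ω, HasDerivAt r' (-(δ (r t)) * r' t - 1 / (r t) ^ 2) t)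
    (hneg : ∀ t ∈ Ioo α ω, r' t ≤ 0) :
    ∃ r0 : ℝ, 0 < r0 ∧ Tendsto r (𝓝[>] α) (𝓝 r0) := by
  have hanti : MonotoneOn (fun t => -(r' t + D * r t)) (Ioo α ω) := by
    apply k_mono (fun t ht => ((hr' t ht).add ((hr t ht).const_mul D)).neg)
    intro t ht
    have h1 := hδb (r t) (hpos t ht)
    have h2 := hneg t ht
    have h3 : 0 ≤ 1 / (r t) ^ 2 := by positivity
    nlinarith
  obtain ⟨t1, ht1⟩ : (Ioo α ω).Nonempty := nonempty_Ioo.2 hαω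
  have hs1 : Ioo α t1 ⊆ Ioo α ω := Ioo_subset_Ioo_right ht1.2.le
  obtain ⟨t2, ht2⟩ : (Ioo α t1).Nonempty := nonempty_Ioo.2 ht1.1
  have hs2 : Ioo α t2 ⊆ Ioo α t1 := Ioo_subset_Ioo_right ht2.2.le
  set c0 := |r' t1 + D * r t1| with hc0
  have hmono : MonotoneOn (fun t => r t * Real.exp (D * t) + c0 * Real.exp (D * t1) * t)
      (Ioo α t1) := by
    have hd : ∀ t ∈ Ioo α t1, HasDerivAt
        (fun t => r t * Real.exp (D * t) + c0 * Real.exp (D * t1) * t)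
        ((r' t + D * r t) * Real.exp (D * t) + c0 * Real.exp (D * t1)) t := by
      intro t ht
      have h1 : HasDerivAt (fun t => Real.exp (D * t)) (Real.exp (D * t) * (D * 1)) t :=
        ((hasDerivAt_id t).const_mul D).exp
      have := ((hr t (hs1 ht)).mul h1).add
        ((hasDerivAt_id t).const_mul (c0 * Real.exp (D * t1)))
      exact this.congr_deriv (by ring)
    apply k_mono hd
    intro t ht
    have h1 := hanti (hs1 ht) ht1 ht.2.le
    simp only at h1
    have h2 : -c0 ≤ r' t + D * r t := by
      have := neg_abs_le (r' t1 + D * r t1)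
      linarith
    have h3 : Real.exp (D * t) ≤ Real.exp (D * t1) := by
      have := ht.2.le
      gcongr
    have h4 : 0 < Real.exp (D * t) := Real.exp_pos _
    have h5 : 0 ≤ c0 := abs_nonneg _
    nlinarith
  have hra : AntitoneOn r (Ioo α t2) := by
    have : MonotoneOn (fun t => - r t) (Ioo α t2) :=
      k_mono (fun t ht => (hr t (hs1 (hs2 ht))).neg)
        (fun t ht => by linarith [hneg t (hs1 (hs2 ht))])
    intro x hx y hy hxy
    have := this hx hy hxy
    simp only at this
    linarith
  have hbdd : BddAbove (r '' Ioo α t2) := by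
    refine ⟨(r t2 * Real.exp (D * t2) + c0 * Real.exp (D * t1) * (t2 - α)) / Real.exp (D * α), ?_⟩
    rintro _ ⟨t, ht, rfl⟩
    rw [le_div_iff₀ (Real.exp_pos _)]
    have h1 := hmono (hs2 ht) ht2 ht.2.le
    simp only at h1
    have h2 : Real.exp (D * α) ≤ Real.exp (D * t) := by
      have := ht.1.le
      gcongr
    have h3 : r t * Real.exp (D * α) ≤ r t * Real.exp (D * t) := by
      have := hpos t (hs1 (hs2 ht))
      gcongr
    have h4 : c0 * Real.exp (D * t1) * α ≤ c0 * Real.exp (D * t1) * t := by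
      have := ht.1.le
      gcongr
    linarith
  refine ⟨_, ?_, AntitoneOn.tendsto_nhdsWithin_Ioo_right (nonempty_Ioo.2 ht2.1) hra hbdd⟩
  obtain ⟨t3, ht3⟩ : (Ioo α t2).Nonempty := nonempty_Ioo.2 ht2.1
  exact lt_of_lt_of_le (hpos t3 (hs1 (hs2 ht3))) (le_csSup hbdd (mem_image_of_mem _ ht3))

open Topology in
lemma k_asym (δ : ℝ → ℝ) (D : ℝ) (hD : 0 ≤ D) (hδ0 : ∀ s > (0 : ℝ), 0 ≤ δ s)
    (hδb : ∀ s > (0 : ℝ), δ s ≤ D)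
    (α ω : ℝ) (hαω : α < ω)
    (r r' : ℝ → ℝ) (hpos : ∀ t ∈ Ioo α ω, 0 < r t)
    (hr : ∀ t ∈ Ioo α ω, HasDerivAt r (r' t) t)
    (hr' : ∀ t ∈ Ioo α ω, HasDerivAt r' (-(δ (r t)) * r' t - 1 / (r t) ^ 2) t)
    (hpos' : ∀ t ∈ Ioo α ω, 0 < r' t) (hlim : Tendsto r (𝓝[>] α) (𝓝 0)) :
    Tendsto (fun t => r t / (t - α) ^ ((2 : ℝ) / 3)) (nhdsWithin α (Ioi α))
      (nhds ((9 / 2 : ℝ) ^ ((1 : ℝ) / 3))) := by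
  have hanti : MonotoneOn (fun t => -(r' t)) (Ioo α ω) := by
    apply k_mono (fun t ht => (hr' t ht).neg)
    intro t ht
    have h1 := hδ0 (r t) (hpos t ht)
    have h2 := hpos' t ht
    have h3 : 0 ≤ 1 / (r t) ^ 2 := by positivity
    nlinarith
  obtain ⟨t2, ht2⟩ : (Ioo α ω).Nonempty := nonempty_Ioo.2 hαω
  have hs2 : Ioo α t2 ⊆ Ioo α ω := Ioo_subset_Ioo_right ht2.2.le
  obtain ⟨t3, ht3⟩ : (Ioo α t2).Nonempty := nonempty_Ioo.2 ht2.1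
  have hs3 : Ioo α t3 ⊆ Ioo α t2 := Ioo_subset_Ioo_right ht3.2.le
  obtain ⟨t4, ht4⟩ : (Ioo α t3).Nonempty := nonempty_Ioo.2 ht3.1
  have hs4 : Ioo α t4 ⊆ Ioo α t3 := Ioo_subset_Ioo_right ht4.2.le
  set c := r' t2 with hc
  have hc0 : 0 < c := hpos' t2 ht2
  have hcle : ∀ t ∈ Ioo α t2, c ≤ r' t := by
    intro t ht
    have := hanti (hs2 ht) ht2 ht.2.le
    simp only at this
    linarith
  have hf1 : MonotoneOn (fun t => r' t + D * r t - c⁻¹ * (r t)⁻¹) (Ioo α t2) := by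
    apply k_mono (fun t ht => ((hr' t (hs2 ht)).add ((hr t (hs2 ht)).const_mul D)).sub
      (((hr t (hs2 ht)).inv (hpos t (hs2 ht)).ne').const_mul c⁻¹))
    intro t ht
    have h0 := hpos t (hs2 ht)
    have h1 := hδb (r t) h0
    have h2 := hcle t ht
    have h3 : 1 / (r t) ^ 2 ≤ c⁻¹ * (r' t / (r t) ^ 2) := by
      rw [← mul_div_assoc]
      gcongr
      rw [inv_mul_eq_div, le_div_iff₀ hc0]
      linarith
    have h4 : δ (r t) * r' t ≤ D * r' t := by
      have := hpos' t (hs2 ht)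
      gcongr
    have h5 : c⁻¹ * (-r' t / (r t) ^ 2) = -(c⁻¹ * (r' t / (r t) ^ 2)) := by ring
    rw [h5]
    linarith
  set K := |r' t3 + D * r t3 - c⁻¹ * (r t3)⁻¹| with hK
  have hup : ∀ t ∈ Ioo α t3, r' t ≤ K + c⁻¹ * (r t)⁻¹ := by
    intro t ht
    have h1 := hf1 (hs3 ht) ht3 ht.2.le
    simp only at h1
    have h2 := le_abs_self (r' t3 + D * r t3 - c⁻¹ * (r t3)⁻¹)
    have h3 : 0 ≤ D * r t := mul_nonneg hD (hpos t (hs2 (hs3 ht))).le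
    linarith
  have hE : ∀ t ∈ Ioo α ω, HasDerivAt (fun t => r' t ^ 2 / 2 - (r t)⁻¹) (-(δ (r t)) * r' t ^ 2) t := by
    intro t ht
    have h0 := (hpos t ht).ne'
    have := (((hr' t ht).pow 2).div_const 2).sub ((hr t ht).inv h0)
    exact this.congr_deriv (by field_simp; ring)
  have hEa : MonotoneOn (fun t => -(r' t ^ 2 / 2 - (r t)⁻¹)) (Ioo α ω) := by
    apply k_mono (fun t ht => (hE t ht).neg)
    intro t ht
    have := mul_nonneg (hδ0 (r t) (hpos t ht)) (sq_nonneg (r' t))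
    linarith
  have hf2 : MonotoneOn (fun t => (r' t ^ 2 / 2 - (r t)⁻¹) + D * K * r t
      + D * c⁻¹ * Real.log (r t)) (Ioo α t3) := by
    apply k_mono (fun t ht => ((hE t (hs2 (hs3 ht))).add
      ((hr t (hs2 (hs3 ht))).const_mul (D * K))).add
      (((hr t (hs2 (hs3 ht))).log (hpos t (hs2 (hs3 ht))).ne').const_mul (D * c⁻¹)))
    intro t ht
    have h0 := hpos t (hs2 (hs3 ht))
    have h1 := hpos' t (hs2 (hs3 ht))
    have h2 : δ (r t) * r' t ≤ D * (K + c⁻¹ * (r t)⁻¹) :=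
      mul_le_mul (hδb _ h0) (hup t ht) h1.le hD
    have h3 := mul_le_mul_of_nonneg_right h2 h1.le
    have h4 : D * c⁻¹ * (r' t / r t) = D * c⁻¹ * (r t)⁻¹ * r' t := by ring
    rw [h4]
    linarith
  set K2 := (r' t4 ^ 2 / 2 - (r t4)⁻¹) + D * K * r t4 + D * c⁻¹ * Real.log (r t4) with hK2
  set E4 := r' t4 ^ 2 / 2 - (r t4)⁻¹ with hE4
  have hrE : Tendsto (fun t => r t * (r' t ^ 2 / 2 - (r t)⁻¹)) (𝓝[>] α) (𝓝 0) := by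
    have hlog : Tendsto (fun t => r t * Real.log (r t)) (𝓝[>] α) (𝓝 0) := by
      have := (Real.continuous_mul_log.tendsto 0).comp hlim
      simpa [Function.comp_def] using this
    have hlo : Tendsto (fun t => r t * E4) (𝓝[>] α) (𝓝 0) := by
      simpa using hlim.mul_const E4
    have hhi : Tendsto (fun t => r t * K2 - D * K * r t ^ 2 - D * c⁻¹ * (r t * Real.log (r t)))
        (𝓝[>] α) (𝓝 0) := by
      simpa using ((hlim.mul_const K2).sub ((hlim.pow 2).const_mul (D * K))).sub
        (hlog.const_mul (D * c⁻¹))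
    refine tendsto_of_tendsto_of_tendsto_of_le_of_le' hlo hhi ?_ ?_
    · filter_upwards [Ioo_mem_nhdsGT ht4.1] with t ht
      have h0 := hpos t (hs2 (hs3 (hs4 ht)))
      have h1 := hEa (hs2 (hs3 (hs4 ht))) (hs2 (hs3 ht4)) ht.2.le
      simp only at h1
      apply mul_le_mul_of_nonneg_left _ h0.le
      linarith
    · filter_upwards [Ioo_mem_nhdsGT ht4.1] with t ht
      have h0 := hpos t (hs2 (hs3 (hs4 ht)))
      have h1 := hf2 (hs4 ht) ht4 ht.2.le
      simp only at h1
      have h2 := mul_le_mul_of_nonneg_left h1 h0.le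
      nlinarith
  have hsq : Tendsto (fun t => r t * r' t ^ 2) (𝓝[>] α) (𝓝 2) := by
    have := (hrE.add_const 1).const_mul 2
    simp only [zero_add, mul_one] at this
    refine this.congr' ?_
    filter_upwards [Ioo_mem_nhdsGT hαω] with t ht
    have h0 := (hpos t ht).ne'
    field_simp
    ring
  have hdl : Tendsto (fun t => (r' t * (3 / 2) * r t ^ ((3:ℝ) / 2 - 1)) / 1) (𝓝[>] α)
      (𝓝 (3 / 2 * √2)) := by
    have := hsq.sqrt.const_mul (3 / 2)
    refine this.congr' ?_
    filter_upwards [Ioo_mem_nhdsGT hαω] with t ht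
    have h0 := hpos t ht
    rw [Real.sqrt_mul h0.le, Real.sqrt_sq (hpos' t ht).le, Real.sqrt_eq_rpow]
    norm_num
    ring
  have hmain : Tendsto (fun t => r t ^ ((3:ℝ) / 2) / (t - α)) (𝓝[>] α) (𝓝 (3 / 2 * √2)) := by
    refine HasDerivAt.lhopital_zero_right_on_Ioo hαω
      (fun t ht => (hr t ht).rpow_const (Or.inl (hpos t ht).ne'))
      (fun t _ => (hasDerivAt_id t).sub_const α) (fun _ _ => one_ne_zero) ?_ ?_ hdl
    · have := hlim.rpow_const (p := (3:ℝ) / 2) (Or.inr (by norm_num))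
      simpa using this
    · have : Tendsto (fun t : ℝ => t - α) (𝓝 α) (𝓝 (α - α)) :=
        (continuous_id.sub continuous_const).tendsto α
      rw [sub_self] at this
      exact this.mono_left nhdsWithin_le_nhds
  have hfin := hmain.rpow_const (p := (2:ℝ) / 3) (Or.inr (by norm_num))
  have hval : (3 / 2 * √2) ^ ((2:ℝ) / 3) = (9 / 2 : ℝ) ^ ((1 : ℝ) / 3) := by
    have h1 : (9 / 2 : ℝ) = (3 / 2 * √2) ^ (2:ℝ) := by
      rw [Real.rpow_two, mul_pow, Real.sq_sqrt (by norm_num)]; norm_num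
    rw [h1, ← Real.rpow_mul (by positivity)]
    norm_num
  rw [hval] at hfin
  refine hfin.congr' ?_
  filter_upwards [Ioo_mem_nhdsGT hαω] with t ht
  have h0 := hpos t ht
  have h1 : 0 < t - α := sub_pos.2 ht.1
  rw [Real.div_rpow (by positivity) h1.le, ← Real.rpow_mul h0.le]
  norm_num

/-- Collision asymptotics: for a maximal solution of the 1D damped Kepler equation
on `]α,ω[` with `α > -∞`, one has `r(t)/(t-α)^{2/3} → (9/2)^{1/3}` as `t → α⁺`. -/
theorem stmt14 (δ : ℝ → ℝ) (hδc : ContinuousOn δ (Ioi 0))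
    (hδ0 : ∀ s > (0 : ℝ), 0 ≤ δ s) (Dstar : ℝ) (hδb : ∀ s > (0 : ℝ), δ s ≤ Dstar)
    (α ω : ℝ) (hαω : α < ω)
    (r r' : ℝ → ℝ) (hsol : Kepler1DOn δ (Ioo α ω) r r')
    (hmax : ¬∃ (a' b' : ℝ) (q q' : ℝ → ℝ), a' ≤ α ∧ ω ≤ b' ∧ (a' < α ∨ ω < b') ∧
      Kepler1DOn δ (Ioo a' b') q q' ∧ ∀ t ∈ Ioo α ω, q t = r t) :
    Tendsto (fun t => r t / (t - α) ^ ((2 : ℝ) / 3)) (nhdsWithin α (Ioi α))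
      (nhds ((9 / 2 : ℝ) ^ ((1 : ℝ) / 3))) := by
  obtain ⟨hpos, hr, hr'⟩ := hsol
  replace hr : ∀ t ∈ Ioo α ω, HasDerivAt r (r' t) t :=
    fun t ht => (hr t ht).hasDerivAt (Ioo_mem_nhds ht.1 ht.2)
  replace hr' : ∀ t ∈ Ioo α ω, HasDerivAt r' (-(δ (r t)) * r' t - 1 / (r t) ^ 2) t :=
    fun t ht => (hr' t ht).hasDerivAt (Ioo_mem_nhds ht.1 ht.2)
  have hD : 0 ≤ Dstar := (hδ0 1 one_pos).trans (hδb 1 one_pos)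
  by_cases hneg : ∀ t ∈ Ioo α ω, r' t ≤ 0
  · obtain ⟨r0, h0, hl⟩ := k_bdd δ Dstar hD hδb α ω hαω r r' hpos hr hr' hneg
    exact absurd (k_ext δ hδc α ω hαω r r' hpos hr hr' r0 h0 hl) hmax
  push Not at hneg
  obtain ⟨t1, ht1, hp1⟩ := hneg
  have hs1 : Ioo α t1 ⊆ Ioo α ω := Ioo_subset_Ioo_right ht1.2.le
  have hpos' : ∀ t ∈ Ioo α t1, 0 < r' t := by
    intro t ht
    by_contra hcon
    have hin : ∀ x ∈ Icc t t1, x ∈ Ioo α ω := fun x hx =>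
      ⟨ht.1.trans_le hx.1, hx.2.trans_lt ht1.2⟩
    have := image_le_of_deriv_right_lt_deriv_boundary (f := r') (a := t) (b := t1)
      (f' := fun t => -(δ (r t)) * r' t - 1 / (r t) ^ 2) (B := fun _ => 0) (B' := fun _ => 0)
      (fun x hx => (hr' x (hin x hx)).continuousAt.continuousWithinAt)
      (fun x hx => (hr' x (hin x ⟨hx.1, hx.2.le⟩)).hasDerivWithinAt)
      (not_lt.1 hcon) (fun x => hasDerivAt_const x 0)
      (fun x hx h => by
        have h0 := hpos x (hin x ⟨hx.1, hx.2.le⟩)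
        have : 0 < 1 / (r x) ^ 2 := by positivity
        rw [h]; linarith)
      (right_mem_Icc.2 ht.2.le)
    linarith
  have hmono : MonotoneOn r (Ioo α t1) :=
    k_mono (fun t ht => hr t (hs1 ht)) (fun t ht => (hpos' t ht).le)
  have hl := MonotoneOn.tendsto_nhdsWithin_Ioo_right (nonempty_Ioo.2 ht1.1) hmono
    ⟨0, by rintro _ ⟨t, ht, rfl⟩; exact (hpos t (hs1 ht)).le⟩
  have hge : 0 ≤ sInf (r '' Ioo α t1) := by
    apply Real.sInf_nonneg
    rintro _ ⟨t, ht, rfl⟩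
    exact (hpos t (hs1 ht)).le
  rcases hge.eq_or_lt with h | h
  · rw [← h] at hl
    exact k_asym δ Dstar hD hδ0 hδb α t1 ht1.1 r r' (fun t ht => hpos t (hs1 ht))
      (fun t ht => hr t (hs1 ht)) (fun t ht => hr' t (hs1 ht)) hpos' hl
  · exact absurd (k_ext δ hδc α ω hαω r r' hpos hr hr' _ h hl) hmax
end
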